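/- Let μ be twice continuously differentiable on [0,1] with μ(α) ≥ ρ for all α ∈ [0,1] for some ρ > 0 (in particular μ(0) ≠ 0). Let Z be the fundamental solution of the one-dimensional ultraslow diffusion equation, characterized by its Laplace transform in t, and assume Z is jointly measurable with x ↦ x² Z(t,x) integrable on ℝ for each t > 0. Then the mean square displacement m(t) = ∫_ℝ x² Z(t,x) dx satisfies m(t) ∼ C log t as t → ∞ for some constant C > 0; that is, there exists C > 0 with lim_{t→∞} m(t)/log t = C. -/

import Mathlib

open MeasureTheory Filter Set

/-- `K(p) = ∫₀¹ p^{α-1} μ(α) dα` for real `p > 0`. -/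
noncomputable def Kreal (μ : ℝ → ℝ) (p : ℝ) : ℝ :=
  ∫ α in (0:ℝ)..1, p ^ (α - 1) * μ α


/-- Alternating differences nonnegative up to order `n`. -/
def CMn : ℕ → (ℕ → ℝ) → Prop
  | 0, f => ∀ k, 0 ≤ f k
  | n + 1, f => (∀ k, 0 ≤ f k) ∧ CMn n (fun k => f k - f (k + 1))

/-- Completely monotone sequences. -/
def CM (f : ℕ → ℝ) : Prop := ∀ n, CMn n f

lemma CMn.nonneg {n : ℕ} {f : ℕ → ℝ} (h : CMn n f) (k : ℕ) : 0 ≤ f k := by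
  cases n with
  | zero => exact h k
  | succ n => exact h.1 k

lemma CMn.pred {n : ℕ} : ∀ {f : ℕ → ℝ}, CMn (n + 1) f → CMn n f := by
  induction n with
  | zero => intro f h; exact h.1
  | succ n ih => intro f h; exact ⟨h.1, ih h.2⟩

lemma CMn.shift {n : ℕ} : ∀ {f : ℕ → ℝ}, CMn n f → CMn n (fun k => f (k + 1)) := by
  induction n with
  | zero => intro f h k; exact h (k + 1)
  | succ n ih => intro f h; exact ⟨fun k => h.1 (k + 1), ih h.2⟩

lemma CMn.add {n : ℕ} : ∀ {f g : ℕ → ℝ}, CMn n f → CMn n g → CMn n (fun k => f k + g k) := by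
  induction n with
  | zero => intro f g hf hg k; exact add_nonneg (hf k) (hg k)
  | succ n ih =>
    intro f g hf hg
    refine ⟨fun k => add_nonneg (hf.1 k) (hg.1 k), ?_⟩
    have := ih hf.2 hg.2
    convert this using 2
    ring

lemma CMn.mul {n : ℕ} : ∀ {f g : ℕ → ℝ}, CMn n f → CMn n g → CMn n (fun k => f k * g k) := by
  induction n with
  | zero => intro f g hf hg k; exact mul_nonneg (hf k) (hg k)
  | succ n ih =>
    intro f g hf hg
    refine ⟨fun k => mul_nonneg (hf.1 k) (hg.1 k), ?_⟩
    have := (ih hf.2 hg.pred).add (ih hf.pred.shift hg.2)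
    convert this using 2
    ring

lemma CMn.zero {n : ℕ} : CMn n (fun _ => 0) := by
  induction n with
  | zero => intro k; exact le_rfl
  | succ n ih => exact ⟨fun k => le_rfl, by simpa using ih⟩

lemma CMn.const {n : ℕ} {c : ℝ} (hc : 0 ≤ c) : CMn n (fun _ => c) := by
  cases n with
  | zero => intro k; exact hc
  | succ n => exact ⟨fun k => hc, by simpa using CMn.zero⟩

lemma CMn.geom {n : ℕ} {r : ℝ} (h0 : 0 ≤ r) (h1 : r ≤ 1) : CMn n (fun k => r ^ k) := by
  induction n with
  | zero => intro k; positivity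
  | succ n ih =>
    refine ⟨fun k => by positivity, ?_⟩
    have := (CMn.const (n := n) (sub_nonneg.2 h1)).mul ih
    convert this using 2
    ring

lemma CMn.pow {n : ℕ} {f : ℕ → ℝ} (hf : CMn n f) (m : ℕ) : CMn n (fun k => f k ^ m) := by
  induction m with
  | zero => simpa using CMn.const (n := n) zero_le_one
  | succ m ih => simpa [pow_succ] using ih.mul hf

lemma CMn.limit {ι : Type*} {l : Filter ι} [l.NeBot] {n : ℕ} :
    ∀ {F : ι → ℕ → ℝ} {f : ℕ → ℝ}, (∀ i, CMn n (F i)) →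
    (∀ k, Tendsto (fun i => F i k) l (nhds (f k))) → CMn n f := by
  induction n with
  | zero => intro F f hF hl k; exact ge_of_tendsto' (hl k) (fun i => hF i k)
  | succ n ih =>
    intro F f hF hl
    exact ⟨fun k => ge_of_tendsto' (hl k) (fun i => (hF i).1 k),
      ih (fun i => (hF i).2) (fun k => (hl k).sub (hl (k + 1)))⟩

lemma CMn.integral {X : Type*} [MeasurableSpace X] {P : Measure X} {n : ℕ} :
    ∀ {F : X → ℕ → ℝ}, (∀ᵐ a ∂P, CMn n (F a)) →
    (∀ k, Integrable (fun a => F a k) P) → CMn n (fun k => ∫ a, F a k ∂P) := by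
  induction n with
  | zero =>
    intro F hF hi k
    exact integral_nonneg_of_ae (hF.mono fun a h => h k)
  | succ n ih =>
    intro F hF hi
    refine ⟨fun k => integral_nonneg_of_ae (hF.mono fun a h => h.1 k), ?_⟩
    have := ih (hF.mono fun a h => h.2) (fun k => (hi k).sub (hi (k + 1)))
    convert this using 2 with k
    rw [integral_sub (hi k) (hi (k + 1))]

lemma CMn.inv {n : ℕ} {b : ℕ → ℝ} (hb : ∀ k, 0 < b k)
    (h : CMn n (fun k => b (k + 1) - b k)) : CMn (n + 1) (fun k => (b k)⁻¹) := by
  have key : (fun k => (b k)⁻¹ - (b (k + 1))⁻¹) =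
      fun k => (b (k + 1) - b k) * ((b k)⁻¹ * (b (k + 1))⁻¹) := by
    ext k
    have := (hb k).ne'
    have := (hb (k + 1)).ne'
    field_simp
  induction n with
  | zero =>
    refine ⟨fun k => (inv_pos.2 (hb k)).le, ?_⟩
    rw [key]
    intro k
    exact mul_nonneg (h k) (mul_nonneg (inv_pos.2 (hb k)).le (inv_pos.2 (hb _)).le)
  | succ n ih =>
    refine ⟨fun k => (inv_pos.2 (hb k)).le, ?_⟩
    have h1 := ih h.pred
    rw [key]
    exact h.mul (h1.mul h1.shift)

lemma CM.sqrt_diff {b : ℕ → ℝ} (hb : ∀ k, 0 < b k)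
    (h : CM (fun k => b (k + 1) - b k)) :
    CM (fun k => Real.sqrt (b (k + 1)) - Real.sqrt (b k)) := by
  intro n
  induction n with
  | zero => intro k; exact sub_nonneg.2 (Real.sqrt_le_sqrt (sub_nonneg.1 (h 0 k)))
  | succ n ih =>
    have hp : ∀ k, 0 < Real.sqrt (b k) := fun k => Real.sqrt_pos.2 (hb k)
    have h1 : CMn (n + 1) (fun k => (Real.sqrt (b k) + Real.sqrt (b (k + 1)))⁻¹) := by
      apply CMn.inv (fun k => add_pos (hp k) (hp _))
      have := ih.add ih.shift
      convert this using 2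
      ring
    have := (h (n + 1)).mul h1
    convert this using 2 with k
    have h2 := Real.sq_sqrt (hb k).le
    have h3 := Real.sq_sqrt (hb (k + 1)).le
    have := add_pos (hp k) (hp (k + 1))
    field_simp
    nlinarith

lemma CM.exp_neg {b : ℕ → ℝ} (hb : ∀ k, 0 ≤ b k)
    (h : CM (fun k => b (k + 1) - b k)) {c : ℝ} (hc : 0 ≤ c) :
    CM (fun k => Real.exp (-(c * b k))) := by
  intro n
  apply CMn.limit (l := atTop) (F := fun (m : ℕ) k => ((1 + c * b k / m)⁻¹) ^ m)
  · intro m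
    apply CMn.pow
    apply CMn.pred
    apply CMn.inv
    · intro k
      have := hb k
      positivity
    · have := (CMn.const (n := n) (div_nonneg hc (Nat.cast_nonneg m))).mul (h n)
      convert this using 2
      ring
  · intro k
    have := (Real.tendsto_one_add_div_pow_exp (c * b k)).inv₀ (Real.exp_pos _).ne'
    rw [Real.exp_neg]
    simpa only [inv_pow] using this

lemma CM.rpow_neg {u β : ℝ} (hu : 0 ≤ u) (hβ : 0 ≤ β) :
    CM (fun k : ℕ => ((k : ℝ) + 1 + u) ^ (-β)) := by
  intro n
  rcases hβ.eq_or_lt with rfl | hβ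
  · simpa using CMn.const (n := n) zero_le_one
  have hG := Real.Gamma_pos_of_pos hβ
  have key : ∀ k : ℕ, ∫ t in Ioi (0:ℝ), t ^ (β - 1) * Real.exp (-(((k : ℝ) + 1 + u) * t)) =
      ((k : ℝ) + 1 + u) ^ (-β) * Real.Gamma β := by
    intro k
    have hk : 0 < (k : ℝ) + 1 + u := by positivity
    rw [Real.integral_rpow_mul_exp_neg_mul_Ioi hβ hk, one_div, Real.inv_rpow hk.le,
      Real.rpow_neg hk.le]
  have h1 : CMn n (fun k : ℕ => ∫ t in Ioi (0:ℝ),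
      t ^ (β - 1) * Real.exp (-(((k : ℝ) + 1 + u) * t))) := by
    apply CMn.integral
    · rw [ae_restrict_iff' measurableSet_Ioi]
      refine Eventually.of_forall fun t ht => ?_
      have ht : 0 < t := ht
      have := (CMn.const (n := n) (c := t ^ (β - 1) * Real.exp (-((1 + u) * t)))
        (by positivity)).mul (CMn.geom (Real.exp_pos (-t)).le (Real.exp_le_one_iff.2 (by linarith)))
      convert this using 2 with k
      rw [← Real.exp_nat_mul, mul_assoc, ← Real.exp_add]
      congr 2
      ring
    · intro k
      have hk : 0 < (k : ℝ) + 1 + u := by positivity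
      by_contra hcon
      have := integral_undef hcon
      rw [key k] at this
      have : 0 < ((k : ℝ) + 1 + u) ^ (-β) * Real.Gamma β := by positivity
      linarith
  have h2 := h1.mul (CMn.const (n := n) (inv_pos.2 hG).le)
  convert h2 using 2 with k
  rw [key k]
  field_simp

lemma CM.rpow_diff {α : ℝ} (h0 : 0 ≤ α) (h1 : α ≤ 1) :
    CM (fun k : ℕ => ((((k + 1 : ℕ) : ℝ) + 1) ^ α - ((k : ℝ) + 1) ^ α)) := by
  intro n
  rcases h0.eq_or_lt with rfl | h0
  · simpa using CMn.zero (n := n)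
  have key : ∀ k : ℕ, ∫ u in (0:ℝ)..1, α * ((k : ℝ) + 1 + u) ^ (-(1 - α)) =
      ((((k + 1 : ℕ) : ℝ) + 1) ^ α - ((k : ℝ) + 1) ^ α) := by
    intro k
    rw [intervalIntegral.integral_const_mul,
      intervalIntegral.integral_comp_add_left (fun x => x ^ (-(1 - α))),
      integral_rpow (Or.inl (by linarith))]
    have : -(1 - α) + 1 = α := by ring
    rw [this]
    push_cast
    field_simp
    simp
  have := CMn.integral (P := volume.restrict (Ioc (0:ℝ) 1)) (n := n)
    (F := fun u (k : ℕ) => α * ((k : ℝ) + 1 + u) ^ (-(1 - α))) ?_ ?_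
  · convert this using 2 with k
    rw [← key k, intervalIntegral.integral_of_le zero_le_one]
  · rw [ae_restrict_iff' measurableSet_Ioc]
    refine Eventually.of_forall fun u hu => ?_
    exact (CMn.const h0.le).mul (CM.rpow_neg hu.1.le (by linarith) n)
  · intro k
    rw [← IntegrableOn, ← intervalIntegrable_iff_integrableOn_Ioc_of_le zero_le_one]
    apply ContinuousOn.intervalIntegrable
    rw [uIcc_of_le zero_le_one]
    apply ContinuousOn.mul continuousOn_const
    apply ContinuousOn.rpow_const (by fun_prop)
    intro u hu
    left
    have := hu.1
    positivity

lemma CMn.integral_poly (n : ℕ) : ∀ (w : ℝ → ℝ) (k : ℕ),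
    (∀ k : ℕ, Integrable (fun t => Real.exp (-((k : ℝ) + 1) * t) * w t)
      (volume.restrict (Ioi 0))) →
    CMn n (fun k : ℕ => ∫ t in Ioi (0:ℝ), Real.exp (-((k : ℝ) + 1) * t) * w t) →
    0 ≤ ∫ t in Ioi (0:ℝ), (1 - Real.exp (-t)) ^ n * (Real.exp (-((k : ℝ) + 1) * t) * w t) := by
  induction n with
  | zero => intro w k hi h; simpa using h k
  | succ n ih =>
    intro w k hi h
    have e : ∀ (k : ℕ) (t : ℝ), Real.exp (-((k : ℝ) + 1) * t) * ((1 - Real.exp (-t)) * w t) =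
        Real.exp (-((k : ℝ) + 1) * t) * w t - Real.exp (-(((k + 1 : ℕ) : ℝ) + 1) * t) * w t := by
      intro k t
      have : Real.exp (-(((k + 1 : ℕ) : ℝ) + 1) * t) =
          Real.exp (-((k : ℝ) + 1) * t) * Real.exp (-t) := by
        rw [← Real.exp_add]; congr 1; push_cast; ring
      rw [this]; ring
    have := ih (fun t => (1 - Real.exp (-t)) * w t) k ?_ ?_
    · convert this using 3 with t
      ring
    · intro k
      simp_rw [e]
      exact (hi k).sub (hi (k + 1))
    · convert h.2 using 2 with k
      simp_rw [e]
      rw [integral_sub (hi k) (hi (k + 1))]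

/-- The map `t ↦ exp (-t)` into the unit interval. -/
noncomputable def eI (t : ℝ) : unitInterval := Set.projIcc (0:ℝ) 1 zero_le_one (Real.exp (-t))

lemma eI_cont : Continuous eI := by
  unfold eI
  exact continuous_projIcc.comp (by fun_prop)

lemma eI_val {t : ℝ} (ht : 0 < t) : ((eI t : unitInterval) : ℝ) = Real.exp (-t) := by
  unfold eI
  rw [Set.projIcc_of_mem zero_le_one ⟨(Real.exp_pos _).le, Real.exp_le_one_iff.2 (by linarith)⟩]

lemma CM.integral_cont {w : ℝ → ℝ}
    (hi : ∀ k : ℕ, Integrable (fun t => Real.exp (-((k : ℝ) + 1) * t) * w t)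
      (volume.restrict (Ioi 0)))
    (h : CM (fun k : ℕ => ∫ t in Ioi (0:ℝ), Real.exp (-((k : ℝ) + 1) * t) * w t))
    (φ : C(unitInterval, ℝ)) (hφ : ∀ s, 0 ≤ φ s) :
    0 ≤ ∫ t in Ioi (0:ℝ), φ (eI t) * (Real.exp (-t) * w t) := by
  have hv : Integrable (fun t => Real.exp (-t) * w t) (volume.restrict (Ioi 0)) := by
    simpa using hi 0
  have hintble : ∀ ψ : C(unitInterval, ℝ), Integrable (fun t => ψ (eI t) * (Real.exp (-t) * w t))
      (volume.restrict (Ioi 0)) := by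
    intro ψ
    refine hv.bdd_mul (c := ‖ψ‖) ?_ ?_
    · exact (ψ.continuous.comp eI_cont).aestronglyMeasurable
    · exact Eventually.of_forall fun t => ψ.norm_coe_le_norm _
  have hpos : ∀ n : ℕ, 0 ≤ ∫ t in Ioi (0:ℝ),
      bernsteinApproximation n φ (eI t) * (Real.exp (-t) * w t) := by
    intro n
    simp_rw [bernsteinApproximation.apply, Finset.sum_mul]
    rw [integral_finsetSum]
    · apply Finset.sum_nonneg
      intro k _
      have h1 := CMn.integral_poly (n - k) w k hi (h _)
      have h2 := mul_nonneg (mul_nonneg (Nat.cast_nonneg (α := ℝ) (n.choose k))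
        (hφ (bernstein.z k))) h1
      rw [← integral_const_mul] at h2
      refine h2.trans_eq (setIntegral_congr_fun measurableSet_Ioi ?_)
      intro t ht
      simp only [smul_eq_mul, bernstein_apply, eI_val ht]
      have : Real.exp (-((k : ℕ) + 1 : ℝ) * t) = Real.exp (-t) ^ (k : ℕ) * Real.exp (-t) := by
        rw [← Real.exp_nat_mul, ← Real.exp_add]; congr 1; ring
      rw [this]
      ring
    · intro k _
      have := (hintble (bernstein n k)).mul_const (φ (bernstein.z k))
      refine this.congr (Eventually.of_forall fun t => ?_)
      simp only [smul_eq_mul]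
      ring
  have hlim := bernsteinApproximation_uniform φ
  have : Tendsto (fun n : ℕ => ∫ t in Ioi (0:ℝ),
      bernsteinApproximation n φ (eI t) * (Real.exp (-t) * w t)) atTop
      (nhds (∫ t in Ioi (0:ℝ), φ (eI t) * (Real.exp (-t) * w t))) := by
    apply tendsto_integral_filter_of_dominated_convergence
      (fun t => (‖φ‖ + 1) * ‖Real.exp (-t) * w t‖)
    · exact Eventually.of_forall fun n => (hintble _).aestronglyMeasurable
    · have : ∀ᶠ n : ℕ in atTop, ‖bernsteinApproximation n φ‖ < ‖φ‖ + 1 :=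
        hlim.norm.eventually_lt_const (by linarith)
      filter_upwards [this] with n hn
      refine Eventually.of_forall fun t => ?_
      rw [norm_mul]
      gcongr
      exact (ContinuousMap.norm_coe_le_norm _ _).trans hn.le
    · exact hv.norm.const_mul _
    · refine Eventually.of_forall fun t => ?_
      apply Tendsto.mul_const
      exact ((continuous_eval_const (F := C(unitInterval, ℝ)) (eI t)).tendsto φ).comp hlim
  exact ge_of_tendsto' this hpos

lemma CM.ae_nonneg {w : ℝ → ℝ} (hw : Measurable w)
    (hi : ∀ k : ℕ, Integrable (fun t => Real.exp (-((k : ℝ) + 1) * t) * w t)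
      (volume.restrict (Ioi 0)))
    (h : CM (fun k : ℕ => ∫ t in Ioi (0:ℝ), Real.exp (-((k : ℝ) + 1) * t) * w t)) :
    ∀ᵐ t ∂(volume.restrict (Ioi (0:ℝ))), 0 ≤ w t := by
  have hv : Integrable (fun t => Real.exp (-t) * w t) (volume.restrict (Ioi 0)) := by
    simpa using hi 0
  set v : ℝ → ℝ := fun t => Real.exp (-t) * w t with hvdef
  have hvm : Measurable v := by fun_prop
  suffices hs : ∀ᵐ t ∂(volume.restrict (Ioi (0:ℝ))), 0 ≤ v t by
    filter_upwards [hs] with t ht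
    exact nonneg_of_mul_nonneg_right ht (Real.exp_pos _)
  refine ae_nonneg_of_forall_setIntegral_nonneg hv fun A hA _ => ?_
  apply le_of_forall_pos_le_add
  intro ε hε
  let P : Measure ℝ := (volume.restrict (Ioi (0:ℝ))).withDensity (fun t => (‖v t‖₊ : ENNReal))
  have hPf : IsFiniteMeasure P := isFiniteMeasure_withDensity hv.2.ne
  have hem : Measurable (fun t : ℝ => Real.exp (-t)) := by fun_prop
  let Q : Measure ℝ := P.map (fun t => Real.exp (-t))
  have hQf : IsFiniteMeasure Q := Measure.isFiniteMeasure_map _ _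
  let A' : Set ℝ := (fun s => -Real.log s) ⁻¹' A
  have hA' : MeasurableSet A' := (Real.measurable_log.neg) hA
  have hindA : Integrable (A'.indicator (fun _ => (1:ℝ))) Q :=
    (integrable_const 1).indicator hA'
  obtain ⟨g, hg, hgi⟩ := hindA.exists_boundedContinuous_integral_sub_le hε
  have e1 : ∫ s, ‖A'.indicator (fun _ => (1:ℝ)) s - g s‖ ∂Q =
      ∫ t in Ioi (0:ℝ), |v t| * |A.indicator (fun _ => (1:ℝ)) t - g (Real.exp (-t))| := by
    rw [integral_map hem.aemeasurable, integral_withDensity_eq_integral_smul]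
    · congr 1
      ext t
      have : A'.indicator (fun _ => (1:ℝ)) (Real.exp (-t)) = A.indicator (fun _ => (1:ℝ)) t := by
        have : Real.exp (-t) ∈ A' ↔ t ∈ A := by simp [A', Set.mem_preimage]
        by_cases ht : t ∈ A
        · rw [Set.indicator_of_mem ht, Set.indicator_of_mem (this.2 ht)]
        · rw [Set.indicator_of_notMem ht, Set.indicator_of_notMem (mt this.1 ht)]
      rw [this]
      simp [NNReal.smul_def]
    · exact hvm.nnnorm
    · exact (hindA.sub hgi).norm.aestronglyMeasurable
  rw [e1] at hg
  let φ : C(unitInterval, ℝ) := ⟨fun s => |g s|, by fun_prop⟩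
  have hφ := CM.integral_cont hi h φ (fun s => abs_nonneg _)
  have hφi : Integrable (fun t => φ (eI t) * v t) (volume.restrict (Ioi 0)) := by
    refine hv.bdd_mul (c := ‖φ‖) ?_ ?_
    · exact (φ.continuous.comp eI_cont).aestronglyMeasurable
    · exact Eventually.of_forall fun t => φ.norm_coe_le_norm _
  have hdi : Integrable (fun t => |v t| * |A.indicator (fun _ => (1:ℝ)) t - g (Real.exp (-t))|)
      (volume.restrict (Ioi 0)) := by
    refine hv.abs.mul_bdd (c := 1 + ‖g‖) ?_ ?_
    · have h1 : Measurable (A.indicator (fun _ => (1:ℝ))) := measurable_const.indicator hA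
      have h2 : Measurable (fun t : ℝ => g (Real.exp (-t))) := g.continuous.measurable.comp hem
      exact (h1.sub h2).norm.aestronglyMeasurable
    · refine Eventually.of_forall fun t => ?_
      rw [Real.norm_eq_abs, abs_abs]
      refine (abs_sub _ _).trans ?_
      gcongr
      · by_cases ht : t ∈ A <;> simp [ht]
      · exact g.norm_coe_le_norm _
  have hAi : Integrable (A.indicator v) (volume.restrict (Ioi 0)) := hv.indicator hA
  have key : ∫ t in Ioi (0:ℝ), φ (eI t) * v t ≤ ∫ t in Ioi (0:ℝ), (A.indicator v t +
      |v t| * |A.indicator (fun _ => (1:ℝ)) t - g (Real.exp (-t))|) := by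
    apply setIntegral_mono_on hφi (hAi.add hdi) measurableSet_Ioi
    intro t ht
    have : φ (eI t) = |g (Real.exp (-t))| := by
      simp only [φ, ContinuousMap.coe_mk, eI_val ht]
    rw [this]
    have h2 : A.indicator v t = A.indicator (fun _ => (1:ℝ)) t * v t := by
      by_cases ht : t ∈ A <;> simp [ht]
    have h3 : 0 ≤ A.indicator (fun _ => (1:ℝ)) t := by
      by_cases ht : t ∈ A <;> simp [ht]
    rw [Pi.add_apply, h2]
    set a := A.indicator (fun _ => (1:ℝ)) t
    set b := g (Real.exp (-t))
    have h4 : |(|b| - a)| ≤ |a - b| := by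
      rw [abs_sub_comm a b]
      calc |(|b| - a)| = |(|b| - |a|)| := by rw [abs_of_nonneg h3]
        _ ≤ |b - a| := abs_abs_sub_abs_le b a
    have h5 : (|b| - a) * v t ≤ |v t| * |a - b| := by
      calc (|b| - a) * v t ≤ |(|b| - a) * v t| := le_abs_self _
        _ = |v t| * |(|b| - a)| := by rw [abs_mul, mul_comm]
        _ ≤ _ := by gcongr
    linarith
  rw [integral_add hAi hdi, integral_indicator hA] at key
  linarith [hφ.trans key]

lemma ae_le_all {f g : ℝ → ℝ} (hf : ContinuousOn f (Ioi 0)) (hg : ContinuousOn g (Ioi 0))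
    (h : ∀ᵐ t ∂(volume.restrict (Ioi (0:ℝ))), f t ≤ g t) : ∀ t > 0, f t ≤ g t := by
  have := Measure.eqOn_open_of_ae_eq (μ := volume) (f := fun t => max (f t) (g t)) (g := g)
    (U := Ioi (0:ℝ)) (h.mono fun t ht => max_eq_right ht) isOpen_Ioi (hf.sup hg) hg
  intro t ht
  exact max_eq_right_iff.1 (this ht)

section Kfacts
variable {μ : ℝ → ℝ} {ρ : ℝ}

lemma pow_cont (hμc : ContinuousOn μ (Icc 0 1)) {p : ℝ} (hp : 0 < p) (c : ℝ) :
    ContinuousOn (fun α => p ^ (α - c) * μ α) (Icc 0 1) := by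
  apply ContinuousOn.mul _ hμc
  apply Continuous.continuousOn
  exact Continuous.rpow continuous_const (by fun_prop) (fun _ => Or.inl hp.ne')

lemma pow_int (hμc : ContinuousOn μ (Icc 0 1)) {p : ℝ} (hp : 0 < p) (c : ℝ) :
    Integrable (fun α => p ^ (α - c) * μ α) (volume.restrict (Ioc 0 1)) :=
  ((pow_cont hμc hp c).integrableOn_Icc).mono_set Ioc_subset_Icc_self

lemma Kreal_pos (hμc : ContinuousOn μ (Icc 0 1)) (hρ : 0 < ρ)
    (hμ : ∀ α ∈ Icc (0:ℝ) 1, ρ ≤ μ α) {p : ℝ} (hp : 0 < p) : 0 < Kreal μ p := by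
  unfold Kreal
  apply intervalIntegral.intervalIntegral_pos_of_pos_on
  · apply ContinuousOn.intervalIntegrable
    rw [uIcc_of_le zero_le_one]
    exact pow_cont hμc hp 1
  · intro x hx
    have := hμ x (Ioo_subset_Icc_self hx)
    exact mul_pos (Real.rpow_pos_of_pos hp _) (by linarith)
  · exact zero_lt_one

lemma B_eq {p : ℝ} (hp : 0 < p) : p * Kreal μ p = ∫ α in Ioc (0:ℝ) 1, p ^ (α - 0) * μ α := by
  unfold Kreal
  rw [intervalIntegral.integral_of_le zero_le_one, ← integral_const_mul]
  congr 1
  ext α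
  rw [Real.rpow_sub_one hp.ne', sub_zero]
  field_simp

lemma CM_K (hμc : ContinuousOn μ (Icc 0 1)) (hρ : 0 < ρ)
    (hμ : ∀ α ∈ Icc (0:ℝ) 1, ρ ≤ μ α) : CM (fun k : ℕ => Kreal μ ((k : ℝ) + 1)) := by
  intro n
  unfold Kreal
  simp_rw [intervalIntegral.integral_of_le (zero_le_one (α := ℝ))]
  apply CMn.integral
  · rw [ae_restrict_iff' measurableSet_Ioc]
    refine Eventually.of_forall fun α hα => ?_
    have := hμ α (Ioc_subset_Icc_self hα)
    have h1 := (CM.rpow_neg (u := 0) (β := 1 - α) le_rfl (by linarith [hα.2]) n).mul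
      (CMn.const (c := μ α) (by linarith))
    simpa using h1
  · intro k
    exact pow_int hμc (by positivity) 1

lemma CM_dB (hμc : ContinuousOn μ (Icc 0 1)) (hρ : 0 < ρ)
    (hμ : ∀ α ∈ Icc (0:ℝ) 1, ρ ≤ μ α) :
    CM (fun k : ℕ => (((k + 1 : ℕ) : ℝ) + 1) * Kreal μ (((k + 1 : ℕ) : ℝ) + 1)
      - ((k : ℝ) + 1) * Kreal μ ((k : ℝ) + 1)) := by
  intro n
  have h := CMn.integral (P := volume.restrict (Ioc (0:ℝ) 1)) (n := n)
    (F := fun α (k : ℕ) => (((k + 1 : ℕ) : ℝ) + 1) ^ (α - 0) * μ α - ((k : ℝ) + 1) ^ (α - 0) * μ α)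
    ?_ ?_
  · convert h using 2 with k
    rw [B_eq (by positivity), B_eq (by positivity), integral_sub]
    · exact pow_int hμc (by positivity) 0
    · exact pow_int hμc (by positivity) 0
  · rw [ae_restrict_iff' measurableSet_Ioc]
    refine Eventually.of_forall fun α hα => ?_
    have := hμ α (Ioc_subset_Icc_self hα)
    have h1 := (CM.rpow_diff hα.1.le hα.2 n).mul (CMn.const (c := μ α) (by linarith))
    convert h1 using 2
    simp only [sub_zero]
    ring
  · intro k
    exact (pow_int hμc (by positivity) 0).sub (pow_int hμc (by positivity) 0)

/-- Laplace transform of `Z`. -/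
noncomputable def FL (μ : ℝ → ℝ) (p x : ℝ) : ℝ :=
  (1 / 2) * Kreal μ p / Real.sqrt (p * Kreal μ p) * Real.exp (-x * Real.sqrt (p * Kreal μ p))

lemma CM_FL_diff (hμc : ContinuousOn μ (Icc 0 1)) (hρ : 0 < ρ)
    (hμ : ∀ α ∈ Icc (0:ℝ) 1, ρ ≤ μ α) {x y : ℝ} (hx : 0 ≤ x) (hxy : x ≤ y) :
    CM (fun k : ℕ => FL μ ((k : ℝ) + 1) x - FL μ ((k : ℝ) + 1) y) := by
  intro n
  have hBpos : ∀ k : ℕ, 0 < ((k : ℝ) + 1) * Kreal μ ((k : ℝ) + 1) := fun k =>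
    mul_pos (by positivity) (Kreal_pos hμc hρ hμ (by positivity))
  have hs := CM.sqrt_diff hBpos (CM_dB hμc hρ hμ)
  have h := CMn.integral (P := volume.restrict (Ioc x y)) (n := n)
    (F := fun ξ (k : ℕ) => (1 / 2) * Kreal μ ((k : ℝ) + 1) *
      Real.exp (-(ξ * Real.sqrt (((k : ℝ) + 1) * Kreal μ ((k : ℝ) + 1))))) ?_ ?_
  · convert h using 2 with k
    rw [← intervalIntegral.integral_of_le hxy]
    have hsp := Real.sqrt_pos.2 (hBpos k)
    unfold FL
    set s := Real.sqrt (((k : ℝ) + 1) * Kreal μ ((k : ℝ) + 1))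
    have : ∀ ξ ∈ uIcc x y, HasDerivAt (fun ξ => - ((1 / 2) * Kreal μ ((k : ℝ) + 1) / s *
        Real.exp (-ξ * s))) ((1 / 2) * Kreal μ ((k : ℝ) + 1) * Real.exp (-(ξ * s))) ξ := by
      intro ξ _
      have h1 : HasDerivAt (fun ξ : ℝ => -ξ * s) (-1 * s) ξ := (hasDerivAt_id ξ).neg.mul_const s
      have h2 := (h1.exp.const_mul ((1 / 2) * Kreal μ ((k : ℝ) + 1) / s)).neg
      refine HasDerivAt.congr_deriv h2 ?_
      rw [neg_mul]
      field_simp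
    rw [intervalIntegral.integral_eq_sub_of_hasDerivAt this]
    · ring
    · apply Continuous.intervalIntegrable
      fun_prop
  · rw [ae_restrict_iff' measurableSet_Ioc]
    refine Eventually.of_forall fun ξ hξ => ?_
    exact ((CMn.const (by norm_num)).mul (CM_K hμc hρ hμ n)).mul
      (CM.exp_neg (fun k => Real.sqrt_nonneg _) hs (hx.trans hξ.1.le) n)
  · intro k
    exact (Continuous.integrableOn_Icc (by fun_prop)).mono_set Ioc_subset_Icc_self

lemma CM_shift (hμc : ContinuousOn μ (Icc 0 1)) (hρ : 0 < ρ)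
    (hμ : ∀ α ∈ Icc (0:ℝ) 1, ρ ≤ μ α) {h : ℝ} (hh : 0 ≤ h) {c : ℝ} (hc : 0 ≤ c) (j : ℕ) :
    CM (fun k : ℕ => c / (((k : ℝ) + 1) * (((k : ℝ) + 1) * Kreal μ ((k : ℝ) + 1)) ^ j)
      * (1 - Real.exp (-((k : ℝ) + 1) * h))) := by
  intro n
  have hBpos : ∀ k : ℕ, 0 < ((k : ℝ) + 1) * Kreal μ ((k : ℝ) + 1) := fun k =>
    mul_pos (by positivity) (Kreal_pos hμc hρ hμ (by positivity))
  have h1 := ((CMn.inv hBpos (CM_dB hμc hρ hμ n)).pred.pow j).mul (CMn.const hc)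
  have h2 : CMn n (fun k : ℕ => ((k : ℝ) + 1)⁻¹ * (1 - Real.exp (-((k : ℝ) + 1) * h))) := by
    have h3 := CMn.integral (P := volume.restrict (Ioc 0 h)) (n := n)
      (F := fun u (k : ℕ) => Real.exp (-((k : ℝ) + 1) * u)) ?_ ?_
    · convert h3 using 2 with k
      rw [← intervalIntegral.integral_of_le hh]
      have hk : (k : ℝ) + 1 ≠ 0 := by positivity
      have hk' : -((k : ℝ) + 1) ≠ 0 := neg_ne_zero.2 hk
      rw [intervalIntegral.integral_comp_mul_left (fun x => Real.exp x) hk', integral_exp]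
      simp only [smul_eq_mul, mul_zero, Real.exp_zero, inv_neg]
      ring
    · rw [ae_restrict_iff' measurableSet_Ioc]
      refine Eventually.of_forall fun u hu => ?_
      have := (CMn.const (n := n) (Real.exp_pos (-u)).le).mul
        (CMn.geom (n := n) (Real.exp_pos (-u)).le (Real.exp_le_one_iff.2 (by linarith [hu.1])))
      convert this using 2 with k
      rw [← Real.exp_nat_mul, ← Real.exp_add]
      congr 1
      ring
    · intro k
      exact (Continuous.integrableOn_Icc (by fun_prop)).mono_set Ioc_subset_Icc_self
  convert h1.mul h2 using 2 with k
  have := (hBpos k).ne'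
  have hk : (k : ℝ) + 1 ≠ 0 := by positivity
  rw [inv_pow, div_eq_mul_inv, mul_inv]
  ring

lemma B_lim0 (hμc : ContinuousOn μ (Icc 0 1)) :
    Tendsto (fun L : ℝ => L * ∫ α in Ioc (0:ℝ) 1, Real.exp (-(α * L)) * μ α) atTop
      (nhds (μ 0)) := by
  obtain ⟨C, hC⟩ := isCompact_Icc.exists_bound_of_continuousOn hμc
  have hm0 : Measurable ((Icc (0:ℝ) 1).indicator μ) := by
    classical
    rw [← Set.piecewise_eq_indicator]
    exact hμc.measurable_piecewise continuousOn_const measurableSet_Icc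
  have hlim : Tendsto (fun L : ℝ => ∫ u in Ioi (0:ℝ), Real.exp (-u) *
      (Icc (0:ℝ) 1).indicator μ (u / L)) atTop (nhds (∫ u in Ioi (0:ℝ), Real.exp (-u) * μ 0)) := by
    apply tendsto_integral_filter_of_dominated_convergence (fun u => Real.exp (-u) * C)
    · filter_upwards [eventually_gt_atTop 0] with L hL
      apply AEStronglyMeasurable.restrict
      apply AEStronglyMeasurable.mul (Continuous.aestronglyMeasurable (by fun_prop))
      exact (hm0.comp (measurable_id.div_const L)).aestronglyMeasurable
    · refine Eventually.of_forall fun L => Eventually.of_forall fun u => ?_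
      rw [norm_mul, Real.norm_of_nonneg (Real.exp_pos _).le]
      gcongr
      by_cases hu : u / L ∈ Icc (0:ℝ) 1
      · rw [indicator_of_mem hu]; exact hC _ hu
      · rw [indicator_of_notMem hu, norm_zero]
        exact (norm_nonneg _).trans (hC 0 ⟨le_rfl, zero_le_one⟩)
    · exact (integrableOn_exp_neg_Ioi 0).mul_const C
    · rw [ae_restrict_iff' measurableSet_Ioi]
      refine Eventually.of_forall fun u (hu : 0 < u) => ?_
      apply Tendsto.const_mul
      have h1 : Tendsto (fun L : ℝ => u / L) atTop (nhdsWithin 0 (Icc 0 1)) := by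
        apply tendsto_nhdsWithin_of_tendsto_nhds_of_eventually_within
        · exact tendsto_const_nhds.div_atTop tendsto_id
        · filter_upwards [eventually_ge_atTop u] with L hL
          have : 0 < L := hu.trans_le hL
          exact ⟨by positivity, (div_le_one this).2 hL⟩
      have h2 := (hμc 0 ⟨le_rfl, zero_le_one⟩).tendsto.comp h1
      refine h2.congr' ?_
      filter_upwards [h1.eventually self_mem_nhdsWithin] with L hL
      exact (indicator_of_mem (s := Icc (0:ℝ) 1) hL μ).symm
  rw [integral_mul_const, integral_exp_neg_Ioi_zero, one_mul] at hlim
  refine hlim.congr' ?_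
  filter_upwards [eventually_gt_atTop 0] with L hL
  have h1 := integral_comp_mul_left_Ioi (fun u => Real.exp (-u) *
      (Icc (0:ℝ) 1).indicator μ (u / L)) 0 hL
  rw [mul_zero, smul_eq_mul] at h1
  have h2 : ∫ α in Ioc (0:ℝ) 1, Real.exp (-(α * L)) * μ α = ∫ x in Ioi (0:ℝ), Real.exp (-(L * x)) *
      (Icc (0:ℝ) 1).indicator μ (L * x / L) := by
    have : ∀ x, Real.exp (-(L * x)) * (Icc (0:ℝ) 1).indicator μ (L * x / L) =
        (Icc (0:ℝ) 1).indicator (fun x => Real.exp (-(x * L)) * μ x) x := by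
      intro x
      rw [mul_div_cancel_left₀ _ hL.ne']
      by_cases hx : x ∈ Icc (0:ℝ) 1
      · simp only [indicator_of_mem hx, mul_comm]
      · simp only [indicator_of_notMem hx, mul_zero]
    simp_rw [this]
    rw [setIntegral_indicator measurableSet_Icc]
    congr 2
    ext x
    simp only [mem_Ioc, mem_inter_iff, mem_Ioi, mem_Icc]
    constructor
    · rintro ⟨a, b⟩; exact ⟨a, a.le, b⟩
    · rintro ⟨a, _, b⟩; exact ⟨a, b⟩
  rw [h2, h1]
  field_simp

lemma B_lim (hμc : ContinuousOn μ (Icc 0 1)) {l : ℝ} (hl : 0 < l) :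
    Tendsto (fun T : ℝ => (l / T * Kreal μ (l / T)) * Real.log T) atTop (nhds (μ 0)) := by
  have h1 : Tendsto (fun T : ℝ => Real.log T - Real.log l) atTop atTop :=
    tendsto_atTop_add_const_right _ _ Real.tendsto_log_atTop
  have h2 := (B_lim0 hμc).comp h1
  have h3 : Tendsto (fun T : ℝ => Real.log T / (Real.log T - Real.log l)) atTop (nhds 1) := by
    have : Tendsto (fun T : ℝ => 1 + Real.log l / (Real.log T - Real.log l)) atTop
        (nhds (1 + 0)) := tendsto_const_nhds.add (tendsto_const_nhds.div_atTop h1)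
    rw [add_zero] at this
    refine this.congr' ?_
    filter_upwards [h1.eventually_gt_atTop 0] with T hT
    field_simp
    ring
  have h4 := h2.mul h3
  rw [mul_one] at h4
  refine h4.congr' ?_
  filter_upwards [h1.eventually_gt_atTop 0, eventually_gt_atTop 0] with T hT hT0
  have : l / T * Kreal μ (l / T) =
      ∫ α in Ioc (0:ℝ) 1, Real.exp (-(α * (Real.log T - Real.log l))) * μ α := by
    have hp : 0 < l / T := by positivity
    rw [B_eq hp]
    congr 1
    ext α
    rw [sub_zero, Real.rpow_def_of_pos hp, Real.log_div hl.ne' hT0.ne']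
    congr 2
    ring
  rw [this]
  simp only [Function.comp]
  field_simp

end Kfacts

lemma tauber {m G : ℝ → ℝ} {C : ℝ} (hm0 : ∀ t > 0, 0 ≤ m t)
    (hmono : ∀ s > 0, ∀ t, s ≤ t → m s ≤ m t)
    (hi : ∀ p : ℝ, 0 < p → IntegrableOn (fun t => Real.exp (-p * t) * m t) (Ioi 0))
    (hL : ∀ p : ℝ, 0 < p → ∫ t in Ioi (0:ℝ), Real.exp (-p * t) * m t = G p / p)
    (hG : ∀ l : ℝ, 0 < l → Tendsto (fun T => G (l / T) / Real.log T) atTop (nhds C)) :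
    Tendsto (fun T => m T / Real.log T) atTop (nhds C) := by
  have expint : ∀ p : ℝ, 0 < p → ∀ a : ℝ, ∫ t in Ioi a, Real.exp (-p * t) =
      Real.exp (-p * a) / p := by
    intro p hp a
    rw [integral_exp_mul_Ioi (by linarith) a]
    field_simp
  have expi : ∀ p : ℝ, 0 < p → ∀ a : ℝ, IntegrableOn (fun t => Real.exp (-p * t)) (Ioi a) := by
    intro p hp a
    exact integrableOn_exp_mul_Ioi (by linarith) a
  have upper : ∀ l : ℝ, 0 < l → ∀ T : ℝ, 0 < T → m T ≤ Real.exp l * G (l / T) := by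
    intro l hl T hT
    have hp : 0 < l / T := by positivity
    have h1 : ∫ t in Ioi T, Real.exp (-(l / T) * t) * m T ≤
        ∫ t in Ioi (0:ℝ), Real.exp (-(l / T) * t) * m t := by
      calc _ ≤ ∫ t in Ioi T, Real.exp (-(l / T) * t) * m t := by
            apply setIntegral_mono_on ((expi _ hp T).mul_const _)
              ((hi _ hp).mono_set (Ioi_subset_Ioi hT.le)) measurableSet_Ioi
            intro t ht
            have := hmono T hT t (le_of_lt ht)
            gcongr
        _ ≤ _ := by
            apply setIntegral_mono_set (hi _ hp)
            · rw [EventuallyLE, ae_restrict_iff' measurableSet_Ioi]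
              exact Eventually.of_forall fun t ht => mul_nonneg (Real.exp_pos _).le (hm0 t ht)
            · exact (Ioi_subset_Ioi hT.le).eventuallyLE
    rw [hL _ hp, integral_mul_const, expint _ hp, div_mul_eq_mul_div,
      div_le_div_iff_of_pos_right hp] at h1
    have h2 : -(l / T) * T = -l := by field_simp
    rw [h2, Real.exp_neg] at h1
    have := Real.exp_pos l
    rwa [inv_mul_le_iff₀ this] at h1
  have lower : ∀ l : ℝ, 1 ≤ l → ∀ T : ℝ, 0 < T →
      G (l / T) - l * Real.exp (1 - l) * G (1 / T) ≤ m T := by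
    intro l hl T hT
    have hl0 : 0 < l := by linarith
    have hp : 0 < l / T := by positivity
    have hq : 0 < 1 / T := by positivity
    have h1 : ∫ t in Ioi (0:ℝ), Real.exp (-(l / T) * t) * m t ≤
        ∫ t in Ioi (0:ℝ), (Real.exp (-(l / T) * t) * m T
          + Real.exp (1 - l) * (Real.exp (-(1 / T) * t) * m t)) := by
      apply setIntegral_mono_on (hi _ hp)
        (((expi _ hp 0).mul_const _).add ((hi _ hq).const_mul _)) measurableSet_Ioi
      intro t (ht : 0 < t)
      simp only [Pi.add_apply]
      rcases le_total t T with h | h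
      · have h3 := hmono t ht T h
        have h4 := hm0 t ht
        have : Real.exp (-(l / T) * t) * m t ≤ Real.exp (-(l / T) * t) * m T := by gcongr
        have : 0 ≤ Real.exp (1 - l) * (Real.exp (-(1 / T) * t) * m t) := by positivity
        linarith
      · have h4 := hm0 t ht
        have h5 := hm0 T hT
        have : Real.exp (-(l / T) * t) * m t ≤
            Real.exp (1 - l) * (Real.exp (-(1 / T) * t) * m t) := by
          rw [← mul_assoc, ← Real.exp_add]
          gcongr
          have : 1 ≤ t / T := (one_le_div hT).2 h
          have e : 1 - l + -(1 / T) * t - -(l / T) * t = (l - 1) * (t / T - 1) := by ring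
          nlinarith [mul_nonneg (sub_nonneg.2 hl) (sub_nonneg.2 this)]
        have : 0 ≤ Real.exp (-(l / T) * t) * m T := by positivity
        linarith
    rw [integral_add ((expi _ hp 0).mul_const _) ((hi _ hq).const_mul _), integral_mul_const,
      integral_const_mul, hL _ hp, hL _ hq, expint _ hp] at h1
    simp only [mul_zero, Real.exp_zero] at h1
    have h2 := mul_le_mul_of_nonneg_left h1 hp.le
    have e1 : l / T * (G (l / T) / (l / T)) = G (l / T) := by field_simp
    have e2 : l / T * (1 / (l / T) * m T + Real.exp (1 - l) * (G (1 / T) / (1 / T))) =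
        m T + l * Real.exp (1 - l) * G (1 / T) := by field_simp
    rw [e1, e2] at h2
    linarith
  rw [tendsto_order]
  constructor
  · intro a ha
    have hlim : Tendsto (fun l : ℝ => C - l * Real.exp (1 - l) * C) atTop (nhds (C - 0 * C)) := by
      apply tendsto_const_nhds.sub
      apply Tendsto.mul_const
      have := (Real.tendsto_pow_mul_exp_neg_atTop_nhds_zero 1).mul_const (Real.exp 1)
      rw [zero_mul] at this
      refine this.congr fun l => ?_
      rw [sub_eq_add_neg, Real.exp_add]
      ring
    rw [zero_mul, sub_zero] at hlim
    obtain ⟨l, hla, hl1⟩ := ((hlim.eventually_const_lt ha).and (eventually_ge_atTop 1)).exists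
    have h1 := (hG l (by linarith)).sub ((hG 1 one_pos).const_mul (l * Real.exp (1 - l)))
    filter_upwards [h1.eventually_const_lt hla, eventually_gt_atTop 1] with T hT hT1
    have hlog := Real.log_pos hT1
    refine hT.trans_le ?_
    have := lower l hl1 T (by linarith)
    rw [mul_div_assoc', ← sub_div]
    gcongr
  · intro a ha
    have hlim : Tendsto (fun l : ℝ => Real.exp l * C) (nhdsWithin 0 (Ioi 0))
        (nhds (Real.exp 0 * C)) :=
      ((Real.continuous_exp.tendsto 0).mono_left nhdsWithin_le_nhds).mul_const C
    rw [Real.exp_zero, one_mul] at hlim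
    obtain ⟨l, hla, hl0⟩ := ((hlim.eventually_lt_const ha).and self_mem_nhdsWithin).exists
    have h1 := (hG l hl0).const_mul (Real.exp l)
    filter_upwards [h1.eventually_lt_const hla, eventually_gt_atTop 1] with T hT hT1
    have hlog := Real.log_pos hT1
    refine lt_of_le_of_lt ?_ hT
    have := upper l hl0 T (by linarith)
    rw [mul_div_assoc']
    gcongr

lemma mono_ae {m : ℝ → ℝ} (hm : Measurable m) {h : ℝ} (hh : 0 ≤ h)
    (hi : ∀ k : ℕ, Integrable (fun t => Real.exp (-((k : ℝ) + 1) * t) * m t)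
      (volume.restrict (Ioi 0)))
    (hcm : CM (fun k : ℕ => (∫ t in Ioi (0:ℝ), Real.exp (-((k : ℝ) + 1) * t) * m t) *
      (1 - Real.exp (-((k : ℝ) + 1) * h)))) :
    ∀ᵐ t ∂(volume.restrict (Ioi (0:ℝ))), m t ≤ m (t + h) := by
  have hmp := measurePreserving_add_right (volume : Measure ℝ) h
  have hemb : MeasurableEmbedding (fun t : ℝ => t + h) := measurableEmbedding_addRight h
  have hpre : (fun t : ℝ => t + h) ⁻¹' (Ioi h) = Ioi 0 := by ext t; simp
  have e : ∀ (k : ℕ) (t : ℝ), Real.exp (-((k : ℝ) + 1) * t) * (Ioi h).indicator (fun t => m (t - h)) t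
      = (Ioi h).indicator (fun t => Real.exp (-((k : ℝ) + 1) * t) * m (t - h)) t := by
    intro k t
    by_cases ht : t ∈ Ioi h
    · rw [indicator_of_mem ht, indicator_of_mem ht]
    · rw [indicator_of_notMem ht, indicator_of_notMem ht, mul_zero]
  have e2 : ∀ (k : ℕ) (t : ℝ), Real.exp (-((k : ℝ) + 1) * (t + h)) * m (t + h - h) =
      Real.exp (-((k : ℝ) + 1) * h) * (Real.exp (-((k : ℝ) + 1) * t) * m t) := by
    intro k t
    rw [add_sub_cancel_right, ← mul_assoc, ← Real.exp_add]
    congr 2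
    ring
  have hi2 : ∀ k : ℕ, Integrable (fun t => Real.exp (-((k : ℝ) + 1) * t) *
      (Ioi h).indicator (fun t => m (t - h)) t) (volume.restrict (Ioi 0)) := by
    intro k
    simp_rw [e]
    apply Integrable.restrict
    rw [integrable_indicator_iff measurableSet_Ioi, ← hmp.integrableOn_comp_preimage hemb, hpre]
    refine ((hi k).const_mul (Real.exp (-((k : ℝ) + 1) * h))).congr
      (Eventually.of_forall fun t => ?_)
    exact (e2 k t).symm
  have hv2 : ∀ k : ℕ, ∫ t in Ioi (0:ℝ), Real.exp (-((k : ℝ) + 1) * t) *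
      (Ioi h).indicator (fun t => m (t - h)) t = Real.exp (-((k : ℝ) + 1) * h) *
        ∫ t in Ioi (0:ℝ), Real.exp (-((k : ℝ) + 1) * t) * m t := by
    intro k
    simp_rw [e]
    rw [setIntegral_indicator measurableSet_Ioi, inter_eq_right.2 (Ioi_subset_Ioi hh),
      ← hmp.setIntegral_preimage_emb hemb, hpre, ← integral_const_mul]
    congr 1
    ext t
    exact e2 k t
  have key := CM.ae_nonneg (w := fun t => m t - (Ioi h).indicator (fun t => m (t - h)) t)
    (hm.sub ((hm.comp (measurable_id.sub_const h)).indicator measurableSet_Ioi)) ?_ ?_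
  · rw [ae_restrict_iff' measurableSet_Ioi] at key ⊢
    have := hmp.quasiMeasurePreserving.ae key
    filter_upwards [this] with t ht ht0
    have ht0 : 0 < t := ht0
    have h1 := ht (show t + h ∈ Ioi 0 from by simp; linarith)
    rw [indicator_of_mem (show t + h ∈ Ioi h from by simpa using ht0), add_sub_cancel_right] at h1
    linarith
  · intro k
    simp_rw [mul_sub]
    exact (hi k).sub (hi2 k)
  · convert hcm using 2 with k
    simp_rw [mul_sub]
    rw [integral_sub (hi k) (hi2 k), hv2]
    ring

lemma abs_moment {s : ℝ} (hs : 0 < s) (j : ℕ) :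
    Integrable (fun x : ℝ => x ^ (2 * j) * Real.exp (-|x| * s)) ∧
    ∫ x : ℝ, x ^ (2 * j) * Real.exp (-|x| * s) = 2 * ((2 * j).factorial / s ^ (2 * j + 1)) := by
  have h1 : ∫ x : ℝ, x ^ (2 * j) * Real.exp (-|x| * s) =
      2 * ((2 * j).factorial / s ^ (2 * j + 1)) := by
    have h2 := integral_comp_abs (f := fun x : ℝ => x ^ (2 * j) * Real.exp (-x * s))
    have h3 : ∀ x : ℝ, |x| ^ (2 * j) = x ^ (2 * j) := fun x => by
      rw [pow_mul, sq_abs, ← pow_mul]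
    simp only [h3] at h2
    rw [h2]
    congr 1
    have h4 := Real.integral_rpow_mul_exp_neg_mul_Ioi (a := ((2 * j : ℕ) : ℝ) + 1) (r := s)
      (by positivity) hs
    rw [Real.Gamma_nat_eq_factorial, add_sub_cancel_right] at h4
    have h5 : (1 / s) ^ (((2 * j : ℕ) : ℝ) + 1) = 1 / s ^ (2 * j + 1) := by
      rw [← Nat.cast_add_one, Real.rpow_natCast, one_div_pow]
    rw [h5] at h4
    simp only [Real.rpow_natCast] at h4
    rw [div_eq_mul_one_div, mul_comm (((2 * j).factorial : ℝ)) (1 / _), ← h4]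
    congr 1
    ext x
    rw [neg_mul, mul_comm x s]
  refine ⟨?_, h1⟩
  by_contra hcon
  rw [integral_undef hcon] at h1
  have : 0 < 2 * (((2 * j).factorial : ℝ) / s ^ (2 * j + 1)) := by positivity
  linarith

lemma alg_aux {p K s : ℝ} (hp : 0 < p) (hs : 0 < s) (h : s ^ 2 = p * K) (F : ℝ) (j : ℕ) :
    1 / 2 * K / s * (2 * (F / s ^ (2 * j + 1))) = F / (p * (p * K) ^ j) := by
  rw [← h, ← pow_mul]
  have e : K = s ^ 2 / p := by rw [h]; field_simp
  rw [e]
  field_simp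
  ring

lemma bound_of_shift {m : ℝ → ℝ} (hm : Measurable m) (hm0 : ∀ t > 0, 0 ≤ m t)
    (hi : IntegrableOn (fun t => Real.exp (-1 * t) * m t) (Ioi 0))
    (hsh : ∀ h : ℝ, 0 ≤ h → ∀ᵐ t ∂(volume.restrict (Ioi (0:ℝ))), m t ≤ m (t + h)) :
    ∃ M : ℝ, 0 ≤ M ∧ ∀ᵐ t ∂(volume.restrict (Ioi (0:ℝ))), m t ≤ M * Real.exp t := by
  have hnn : ∀ t ∈ Ioi (0:ℝ), 0 ≤ Real.exp (-1 * t) * m t := fun t ht =>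
    mul_nonneg (Real.exp_pos _).le (hm0 t ht)
  refine ⟨∫ t in Ioi (0:ℝ), Real.exp (-1 * t) * m t,
    setIntegral_nonneg measurableSet_Ioi hnn, ?_⟩
  have h1 : ∀ᵐ h ∂(volume.restrict (Ioi (0:ℝ))), ∀ᵐ t ∂(volume.restrict (Ioi (0:ℝ))),
      m t ≤ m (t + h) := by
    rw [ae_restrict_iff' measurableSet_Ioi]
    exact Eventually.of_forall fun h hh => hsh h (le_of_lt hh)
  rw [Measure.ae_ae_comm] at h1
  swap
  · exact measurableSet_le (hm.comp measurable_snd)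
      (hm.comp (measurable_snd.add measurable_fst))
  filter_upwards [h1, ae_restrict_mem measurableSet_Ioi] with t ht (ht0 : 0 < t)
  have hmp := measurePreserving_add_right (volume : Measure ℝ) t
  have hemb : MeasurableEmbedding (fun h : ℝ => h + t) := measurableEmbedding_addRight t
  have hpre : (fun h : ℝ => h + t) ⁻¹' (Ioi t) = Ioi 0 := by ext h; simp
  have hit : IntegrableOn (fun t => Real.exp (-1 * t) * m t) (Ioi t) :=
    hi.mono_set (Ioi_subset_Ioi ht0.le)
  have hii : IntegrableOn (fun h => Real.exp (-1 * (h + t)) * m (h + t)) (Ioi 0) := by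
    rw [← hmp.integrableOn_comp_preimage hemb, hpre] at hit
    exact hit
  have h2 : ∫ h in Ioi (0:ℝ), Real.exp (-1 * (h + t)) * m (h + t) =
      ∫ u in Ioi t, Real.exp (-1 * u) * m u := by
    have := hmp.setIntegral_preimage_emb hemb (fun u => Real.exp (-1 * u) * m u) (Ioi t)
    rw [hpre] at this
    exact this
  have h3 : ∫ u in Ioi t, Real.exp (-1 * u) * m u ≤ ∫ u in Ioi (0:ℝ), Real.exp (-1 * u) * m u := by
    apply setIntegral_mono_set hi
    · rw [EventuallyLE, ae_restrict_iff' measurableSet_Ioi]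
      exact Eventually.of_forall hnn
    · exact (Ioi_subset_Ioi ht0.le).eventuallyLE
  have h4 : ∫ h in Ioi (0:ℝ), Real.exp (-h) * (Real.exp (-t) * m t) ≤
      ∫ h in Ioi (0:ℝ), Real.exp (-1 * (h + t)) * m (h + t) := by
    apply integral_mono_ae ((integrableOn_exp_neg_Ioi 0).mul_const _) hii
    filter_upwards [ht] with h hh
    have : Real.exp (-1 * (h + t)) = Real.exp (-h) * Real.exp (-t) := by
      rw [← Real.exp_add]; congr 1; ring
    rw [this, ← mul_assoc, add_comm h t]
    gcongr
  rw [integral_mul_const, integral_exp_neg_Ioi_zero, one_mul, h2] at h4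
  have h5 := h4.trans h3
  rw [Real.exp_neg, inv_mul_le_iff₀ (Real.exp_pos t)] at h5
  rwa [mul_comm]

section Zfacts
variable {μ : ℝ → ℝ} {ρ : ℝ} {Z : ℝ → ℝ → ℝ}

lemma Z_mono (hμc : ContinuousOn μ (Icc 0 1)) (hρ : 0 < ρ)
    (hμ : ∀ α ∈ Icc (0:ℝ) 1, ρ ≤ μ α)
    (hZc : ∀ x : ℝ, ContinuousOn (fun t => Z t x) (Ioi 0))
    (hZmeas : Measurable (Function.uncurry Z))
    (hi : ∀ p : ℝ, 0 < p → ∀ x : ℝ, IntegrableOn (fun t : ℝ => Real.exp (-p * t) * Z t x) (Ioi 0))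
    (hL : ∀ p : ℝ, 0 < p → ∀ x : ℝ, ∫ t in Ioi (0:ℝ), Real.exp (-p * t) * Z t x = FL μ p |x|)
    {x y : ℝ} (hxy : |x| ≤ |y|) : ∀ t > 0, Z t y ≤ Z t x := by
  apply ae_le_all (hZc y) (hZc x)
  have hm : ∀ x, Measurable (fun t => Z t x) := fun x =>
    hZmeas.comp (measurable_id.prodMk measurable_const)
  have := CM.ae_nonneg (w := fun t => Z t x - Z t y) ((hm x).sub (hm y)) ?_ ?_
  · filter_upwards [this] with t ht
    linarith
  · intro k
    simp_rw [mul_sub]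
    exact (hi _ (by positivity) x).sub (hi _ (by positivity) y)
  · convert CM_FL_diff hμc hρ hμ (abs_nonneg x) hxy using 2 with k
    simp_rw [mul_sub]
    rw [integral_sub (hi _ (by positivity) x) (hi _ (by positivity) y), hL _ (by positivity),
      hL _ (by positivity)]

lemma Z_nonneg (hμc : ContinuousOn μ (Icc 0 1)) (hρ : 0 < ρ)
    (hμ : ∀ α ∈ Icc (0:ℝ) 1, ρ ≤ μ α)
    (hZc : ∀ x : ℝ, ContinuousOn (fun t => Z t x) (Ioi 0))
    (hZmeas : Measurable (Function.uncurry Z))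
    (hi : ∀ p : ℝ, 0 < p → ∀ x : ℝ, IntegrableOn (fun t : ℝ => Real.exp (-p * t) * Z t x) (Ioi 0))
    (hL : ∀ p : ℝ, 0 < p → ∀ x : ℝ, ∫ t in Ioi (0:ℝ), Real.exp (-p * t) * Z t x = FL μ p |x|)
    (x : ℝ) : ∀ t > 0, 0 ≤ Z t x := by
  apply ae_le_all continuousOn_const (hZc x)
  have hm : Measurable (fun t => Z t x) := hZmeas.comp (measurable_id.prodMk measurable_const)
  apply CM.ae_nonneg hm (fun k => hi _ (by positivity) x)
  intro n
  apply CMn.limit (l := atTop)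
    (F := fun (N : ℕ) (k : ℕ) => FL μ ((k : ℝ) + 1) |x| - FL μ ((k : ℝ) + 1) (|x| + N))
  · intro N
    exact CM_FL_diff hμc hρ hμ (abs_nonneg x) (by simp) n
  · intro k
    rw [hL _ (by positivity)]
    have hs : 0 < Real.sqrt (((k : ℝ) + 1) * Kreal μ ((k : ℝ) + 1)) :=
      Real.sqrt_pos.2 (mul_pos (by positivity) (Kreal_pos hμc hρ hμ (by positivity)))
    have : Tendsto (fun N : ℕ => FL μ ((k : ℝ) + 1) (|x| + N)) atTop (nhds 0) := by
      unfold FL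
      rw [← mul_zero (1 / 2 * Kreal μ ((k : ℝ) + 1) /
        Real.sqrt (((k : ℝ) + 1) * Kreal μ ((k : ℝ) + 1)))]
      apply Tendsto.const_mul
      apply Real.tendsto_exp_atBot.comp
      apply Tendsto.atBot_mul_const hs
      apply tendsto_neg_atTop_atBot.comp
      exact tendsto_atTop_add_const_left _ _ tendsto_natCast_atTop_atTop
    simpa using tendsto_const_nhds.sub this

lemma m_lap (hμc : ContinuousOn μ (Icc 0 1)) (hρ : 0 < ρ)
    (hμ : ∀ α ∈ Icc (0:ℝ) 1, ρ ≤ μ α)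
    (hZmeas : Measurable (Function.uncurry Z))
    (hZ0 : ∀ x, ∀ t > 0, 0 ≤ Z t x)
    (hi : ∀ p : ℝ, 0 < p → ∀ x : ℝ, IntegrableOn (fun t : ℝ => Real.exp (-p * t) * Z t x) (Ioi 0))
    (hL : ∀ p : ℝ, 0 < p → ∀ x : ℝ, ∫ t in Ioi (0:ℝ), Real.exp (-p * t) * Z t x = FL μ p |x|)
    (j : ℕ) {p : ℝ} (hp : 0 < p) :
    IntegrableOn (fun t : ℝ => Real.exp (-p * t) * ∫ x, x ^ (2 * j) * Z t x) (Ioi 0) ∧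
    ∫ t in Ioi (0:ℝ), Real.exp (-p * t) * ∫ x, x ^ (2 * j) * Z t x =
      (2 * j).factorial / (p * (p * Kreal μ p) ^ j) ∧
    ∀ᵐ t ∂(volume.restrict (Ioi (0:ℝ))), Integrable (fun x => x ^ (2 * j) * Z t x) := by
  have hK := Kreal_pos hμc hρ hμ hp
  have hs : 0 < Real.sqrt (p * Kreal μ p) := Real.sqrt_pos.2 (mul_pos hp hK)
  have hs2 : Real.sqrt (p * Kreal μ p) ^ 2 = p * Kreal μ p := Real.sq_sqrt (mul_pos hp hK).le
  have hev : ∀ x : ℝ, 0 ≤ x ^ (2 * j) := fun x => by rw [pow_mul]; positivity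
  let f : ℝ → ℝ → ℝ := fun t x => Real.exp (-p * t) * (x ^ (2 * j) * Z t x)
  have hfm : Measurable (Function.uncurry f) := by
    have h1 : Measurable (fun q : ℝ × ℝ => Z q.1 q.2) := hZmeas
    show Measurable (fun q : ℝ × ℝ => Real.exp (-p * q.1) * (q.2 ^ (2 * j) * Z q.1 q.2))
    fun_prop
  have hcomm : ∀ t x, f t x = x ^ (2 * j) * (Real.exp (-p * t) * Z t x) := by
    intro t x; simp only [f]; ring
  have hinner : ∀ x, ∫ t in Ioi (0:ℝ), f t x = x ^ (2 * j) * FL μ p |x| := by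
    intro x
    simp_rw [hcomm]
    rw [integral_const_mul, hL p hp]
  have hFL : ∀ x : ℝ, x ^ (2 * j) * FL μ p |x| = ((1 / 2) * Kreal μ p / Real.sqrt (p * Kreal μ p)) *
      (x ^ (2 * j) * Real.exp (-|x| * Real.sqrt (p * Kreal μ p))) := by
    intro x; unfold FL; ring
  have hFi : Integrable (fun x : ℝ => x ^ (2 * j) * FL μ p |x|) := by
    simp_rw [hFL]
    exact (abs_moment hs j).1.const_mul _
  have hintble : Integrable (Function.uncurry f) ((volume.restrict (Ioi 0)).prod volume) := by
    rw [integrable_prod_iff' hfm.aestronglyMeasurable]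
    constructor
    · refine Eventually.of_forall fun x => ?_
      simp only [Function.uncurry_apply_pair]
      simp_rw [hcomm]
      exact (hi p hp x).const_mul _
    · refine hFi.congr (Eventually.of_forall fun x => ?_)
      simp only [Function.uncurry_apply_pair]
      rw [← hinner x]
      apply setIntegral_congr_fun measurableSet_Ioi
      intro t ht
      refine (Real.norm_of_nonneg ?_).symm
      exact mul_nonneg (Real.exp_pos _).le (mul_nonneg (hev x) (hZ0 x t ht))
  refine ⟨?_, ?_, ?_⟩
  · have := hintble.integral_prod_left
    refine this.congr (Eventually.of_forall fun t => ?_)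
    simp only [Function.uncurry_apply_pair, f]
    rw [integral_const_mul]
  · simp_rw [← integral_const_mul]
    have := integral_integral_swap hintble
    simp only [f] at this
    rw [this]
    have h2 := hinner
    simp only [f] at h2
    simp_rw [h2, hFL]
    rw [integral_const_mul, (abs_moment hs j).2]
    exact alg_aux hp hs hs2 _ j
  · filter_upwards [hintble.prod_right_ae] with t ht
    have := ht.const_mul (Real.exp (-p * t))⁻¹
    refine this.congr (Eventually.of_forall fun x => ?_)
    simp only [Function.uncurry_apply_pair, f]
    have := (Real.exp_pos (-p * t)).ne'
    field_simp

lemma m_meas (hZmeas : Measurable (Function.uncurry Z)) (j : ℕ) :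
    Measurable (fun t => ∫ x : ℝ, x ^ (2 * j) * Z t x) := by
  have h1 : Measurable (fun q : ℝ × ℝ => Z q.1 q.2) := hZmeas
  have : Measurable (Function.uncurry fun t (x : ℝ) => x ^ (2 * j) * Z t x) := by
    show Measurable (fun q : ℝ × ℝ => q.2 ^ (2 * j) * Z q.1 q.2)
    fun_prop
  exact this.stronglyMeasurable.integral_prod_right.measurable

lemma m_mono_ae (hμc : ContinuousOn μ (Icc 0 1)) (hρ : 0 < ρ)
    (hμ : ∀ α ∈ Icc (0:ℝ) 1, ρ ≤ μ α)
    (hZmeas : Measurable (Function.uncurry Z))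
    (hZ0 : ∀ x, ∀ t > 0, 0 ≤ Z t x)
    (hi : ∀ p : ℝ, 0 < p → ∀ x : ℝ, IntegrableOn (fun t : ℝ => Real.exp (-p * t) * Z t x) (Ioi 0))
    (hL : ∀ p : ℝ, 0 < p → ∀ x : ℝ, ∫ t in Ioi (0:ℝ), Real.exp (-p * t) * Z t x = FL μ p |x|)
    (j : ℕ) {h : ℝ} (hh : 0 ≤ h) :
    ∀ᵐ t ∂(volume.restrict (Ioi (0:ℝ))),
      ∫ x : ℝ, x ^ (2 * j) * Z t x ≤ ∫ x : ℝ, x ^ (2 * j) * Z (t + h) x := by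
  apply mono_ae (m := fun t => ∫ x : ℝ, x ^ (2 * j) * Z t x) (m_meas hZmeas j) hh
  · intro k
    exact (m_lap hμc hρ hμ hZmeas hZ0 hi hL j (by positivity)).1
  · convert CM_shift hμc hρ hμ hh (c := ((2 * j).factorial : ℝ)) (by positivity) j using 2 with k
    rw [(m_lap hμc hρ hμ hZmeas hZ0 hi hL j (by positivity)).2.1]

lemma m_bound_ae (hμc : ContinuousOn μ (Icc 0 1)) (hρ : 0 < ρ)
    (hμ : ∀ α ∈ Icc (0:ℝ) 1, ρ ≤ μ α)
    (hZmeas : Measurable (Function.uncurry Z))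
    (hZ0 : ∀ x, ∀ t > 0, 0 ≤ Z t x)
    (hi : ∀ p : ℝ, 0 < p → ∀ x : ℝ, IntegrableOn (fun t : ℝ => Real.exp (-p * t) * Z t x) (Ioi 0))
    (hL : ∀ p : ℝ, 0 < p → ∀ x : ℝ, ∫ t in Ioi (0:ℝ), Real.exp (-p * t) * Z t x = FL μ p |x|)
    (j : ℕ) : ∃ M : ℝ, 0 ≤ M ∧
    ∀ᵐ t ∂(volume.restrict (Ioi (0:ℝ))), ∫ x : ℝ, x ^ (2 * j) * Z t x ≤ M * Real.exp t := by
  obtain ⟨hmi, -, -⟩ := m_lap hμc hρ hμ hZmeas hZ0 hi hL j one_pos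
  have hmm := m_meas hZmeas j
  have hsh := fun (h : ℝ) (hh : 0 ≤ h) => m_mono_ae hμc hρ hμ hZmeas hZ0 hi hL j hh
  have hev : ∀ x : ℝ, 0 ≤ x ^ (2 * j) := fun x => by rw [pow_mul]; positivity
  have hm0 : ∀ t > 0, 0 ≤ ∫ x : ℝ, x ^ (2 * j) * Z t x := fun t ht =>
    integral_nonneg fun x => mul_nonneg (hev x) (hZ0 x t ht)
  exact bound_of_shift hmm hm0 hmi hsh

lemma Z_bound (hZc : ∀ x : ℝ, ContinuousOn (fun t => Z t x) (Ioi 0))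
    (hZ0 : ∀ x, ∀ t > 0, 0 ≤ Z t x)
    (hmono : ∀ x y : ℝ, |x| ≤ |y| → ∀ t > 0, Z t y ≤ Z t x) {M : ℝ}
    (hM : ∀ᵐ t ∂(volume.restrict (Ioi (0:ℝ))), ∫ x : ℝ, x ^ (2 * 2) * Z t x ≤ M * Real.exp t)
    (hintble : ∀ᵐ t ∂(volume.restrict (Ioi (0:ℝ))), Integrable (fun x => x ^ (2 * 2) * Z t x))
    {R : ℝ} (hR : 0 < R) : ∀ t > 0, R ^ 5 * Z t (2 * R) ≤ M * Real.exp t := by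
  apply ae_le_all
  · exact continuousOn_const.mul (hZc _)
  · fun_prop
  filter_upwards [hM, hintble, ae_restrict_mem measurableSet_Ioi] with t h1 h2 (ht : 0 < t)
  refine le_trans ?_ h1
  calc R ^ 5 * Z t (2 * R) = ∫ x in Ioc R (2 * R), R ^ 4 * Z t (2 * R) := by
        rw [setIntegral_const, Measure.real, Real.volume_Ioc, smul_eq_mul,
          ENNReal.toReal_ofReal (by linarith)]
        ring
    _ ≤ ∫ x in Ioc R (2 * R), x ^ (2 * 2) * Z t x := by
        apply setIntegral_mono_on _ h2.integrableOn measurableSet_Ioc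
        · intro x hx
          have hx0 : 0 < x := hR.trans hx.1
          have := hmono x (2 * R) (by rw [abs_of_pos hx0, abs_of_pos (by linarith)]; exact hx.2) t ht
          have := hZ0 (2 * R) t ht
          have := hx.1.le
          norm_num
          gcongr
        · exact integrableOn_const (by simp)
    _ ≤ ∫ x : ℝ, x ^ (2 * 2) * Z t x := by
        apply setIntegral_le_integral h2
        refine Eventually.of_forall fun x => ?_
        have := hZ0 x t ht
        show 0 ≤ x ^ (2 * 2) * Z t x
        rw [pow_mul]
        positivity

lemma m_cont (hZc : ∀ x : ℝ, ContinuousOn (fun t => Z t x) (Ioi 0))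
    (hZmeas : Measurable (Function.uncurry Z))
    (hZ0 : ∀ x, ∀ t > 0, 0 ≤ Z t x)
    (hmono : ∀ x y : ℝ, |x| ≤ |y| → ∀ t > 0, Z t y ≤ Z t x) {M : ℝ} (hM0 : 0 ≤ M)
    (hb : ∀ R > 0, ∀ t > 0, R ^ 5 * Z t (2 * R) ≤ M * Real.exp t) :
    ContinuousOn (fun t => ∫ x : ℝ, x ^ 2 * Z t x) (Ioi 0) := by
  intro t0 (ht0 : 0 < t0)
  apply ContinuousAt.continuousWithinAt
  have hcpt : IsCompact (Icc (t0 / 2) (t0 + 1)) := isCompact_Icc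
  have hsub : Icc (t0 / 2) (t0 + 1) ⊆ Ioi (0:ℝ) := fun t ht => by
    have := ht.1
    show 0 < t
    linarith
  obtain ⟨A, hA⟩ := hcpt.exists_bound_of_continuousOn ((hZc 0).mono hsub)
  have hnb : Icc (t0 / 2) (t0 + 1) ∈ nhds t0 := Icc_mem_nhds (by linarith) (by linarith)
  have hA0 : 0 ≤ A := (norm_nonneg _).trans (hA t0 ⟨by linarith, by linarith⟩)
  set D : ℝ := 32 * (M * Real.exp (t0 + 1)) with hD
  have hD0 : 0 ≤ D := by positivity
  apply continuousAt_of_dominated (bound := fun x => (2 * A + 2 * D) * (1 + x ^ 2)⁻¹)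
  · refine Eventually.of_forall fun t => ?_
    have : Measurable (fun x => Z t x) := hZmeas.comp (measurable_const.prodMk measurable_id)
    exact (by fun_prop : Measurable (fun x => x ^ 2 * Z t x)).aestronglyMeasurable
  · filter_upwards [hnb] with t ht
    refine Eventually.of_forall fun x => ?_
    have htp : 0 < t := hsub ht
    have hz := hZ0 x t htp
    rw [Real.norm_of_nonneg (by positivity), ← div_eq_mul_inv, le_div_iff₀ (by positivity)]
    rcases le_total |x| 1 with hx | hx
    · have h1 : Z t x ≤ A := by
        refine (hmono 0 x (by simp) t htp).trans ?_
        exact (le_abs_self _).trans (hA t ht)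
      have h2 : x ^ 2 ≤ 1 := by rw [← sq_abs]; exact pow_le_one₀ (abs_nonneg x) hx
      have h3 : x ^ 2 * (1 + x ^ 2) ≤ 2 := by nlinarith [sq_nonneg x]
      calc x ^ 2 * Z t x * (1 + x ^ 2) = x ^ 2 * (1 + x ^ 2) * Z t x := by ring
        _ ≤ 2 * A := by gcongr
        _ ≤ _ := by linarith
    · have h1 : Z t x ≤ Z t (2 * (|x| / 2)) := hmono _ _ (by
        rw [abs_of_nonneg (by positivity)]; linarith) t htp
      have h2 := hb (|x| / 2) (by linarith) t htp
      have h3 : M * Real.exp t ≤ M * Real.exp (t0 + 1) := by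
        have := ht.2
        gcongr
      have h4 : |x| ^ 5 * Z t x ≤ D := by
        calc |x| ^ 5 * Z t x ≤ |x| ^ 5 * Z t (2 * (|x| / 2)) := by gcongr
          _ = 32 * ((|x| / 2) ^ 5 * Z t (2 * (|x| / 2))) := by ring
          _ ≤ D := by rw [hD]; linarith
      have h5 : x ^ 2 * (1 + x ^ 2) ≤ 2 * |x| ^ 5 := by
        rw [← sq_abs]
        have a : |x| ^ 2 ≤ |x| ^ 5 := pow_le_pow_right₀ hx (by norm_num)
        have b : |x| ^ 4 ≤ |x| ^ 5 := pow_le_pow_right₀ hx (by norm_num)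
        nlinarith
      calc x ^ 2 * Z t x * (1 + x ^ 2) = x ^ 2 * (1 + x ^ 2) * Z t x := by ring
        _ ≤ 2 * |x| ^ 5 * Z t x := by gcongr
        _ ≤ _ := by linarith
  · exact integrable_inv_one_add_sq.const_mul _
  · refine Eventually.of_forall fun x => ?_
    exact continuousAt_const.mul ((hZc x).continuousAt (Ioi_mem_nhds ht0))

end Zfacts

theorem mean_square_displacement_log_growth (μ : ℝ → ℝ) (ρ : ℝ)
    (hC2 : ContDiffOn ℝ 2 μ (Set.Icc 0 1))
    (hρ : 0 < ρ) (hμlow : ∀ α ∈ Set.Icc (0:ℝ) 1, ρ ≤ μ α)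
    (Z : ℝ → ℝ → ℝ)
    (hZc : ∀ x : ℝ, ContinuousOn (fun t => Z t x) (Set.Ioi 0))
    (hZmeas : Measurable (Function.uncurry Z))
    (hZint : ∀ t > (0:ℝ), Integrable (fun x : ℝ => x ^ 2 * Z t x))
    (hZlap : ∀ p : ℝ, 0 < p → ∀ x : ℝ,
      IntegrableOn (fun t : ℝ => Real.exp (-p * t) * Z t x) (Set.Ioi 0) ∧
      ∫ t in Set.Ioi (0:ℝ), Real.exp (-p * t) * Z t x
        = (1 / 2) * Kreal μ p / Real.sqrt (p * Kreal μ p)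
            * Real.exp (-|x| * Real.sqrt (p * Kreal μ p))) :
    ∃ C > (0:ℝ),
      Tendsto (fun t : ℝ => (∫ x : ℝ, x ^ 2 * Z t x) / Real.log t) atTop
        (nhds C) := by
  have hμc : ContinuousOn μ (Icc 0 1) := hC2.continuousOn
  have hi := fun p hp x => (hZlap p hp x).1
  have hL : ∀ p : ℝ, 0 < p → ∀ x : ℝ,
      ∫ t in Ioi (0:ℝ), Real.exp (-p * t) * Z t x = FL μ p |x| :=
    fun p hp x => (hZlap p hp x).2
  have hmono : ∀ x y : ℝ, |x| ≤ |y| → ∀ t > 0, Z t y ≤ Z t x := fun x y hxy =>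
    Z_mono hμc hρ hμlow hZc hZmeas hi hL hxy
  have hZ0 := Z_nonneg hμc hρ hμlow hZc hZmeas hi hL
  obtain ⟨M, hM0, hM⟩ := m_bound_ae hμc hρ hμlow hZmeas hZ0 hi hL 2
  have hint4 := (m_lap hμc hρ hμlow hZmeas hZ0 hi hL 2 one_pos).2.2
  have hb := fun R (hR : R > 0) => Z_bound hZc hZ0 hmono hM hint4 hR
  have hcont := m_cont hZc hZmeas hZ0 hmono hM0 hb
  have hm2 : ∀ s > 0, ∀ t, s ≤ t → ∫ x : ℝ, x ^ 2 * Z s x ≤ ∫ x : ℝ, x ^ 2 * Z t x := by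
    intro s hs t hst
    have hh : 0 ≤ t - s := by linarith
    have h1 := m_mono_ae hμc hρ hμlow hZmeas hZ0 hi hL 1 hh
    simp only [mul_one] at h1
    have h2 := ae_le_all hcont (g := fun r => ∫ x : ℝ, x ^ 2 * Z (r + (t - s)) x)
      (hcont.comp (f := fun r => r + (t - s)) (by fun_prop) (fun r hr => by
        have : 0 < r := hr
        show 0 < r + (t - s)
        linarith)) h1 s hs
    simpa using h2
  have hμ0 : 0 < μ 0 := hρ.trans_le (hμlow 0 ⟨le_rfl, zero_le_one⟩)
  have hlap := fun p hp => m_lap hμc hρ hμlow hZmeas hZ0 hi hL 1 (p := p) hp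
  simp only [mul_one, pow_one] at hlap
  refine ⟨2 / μ 0, by positivity, ?_⟩
  apply tauber (G := fun p => 2 / (p * Kreal μ p))
  · intro t ht
    exact integral_nonneg fun x => mul_nonneg (sq_nonneg x) (hZ0 x t ht)
  · exact hm2
  · exact fun p hp => (hlap p hp).1
  · intro p hp
    rw [(hlap p hp).2.1, div_div, mul_comm p (p * Kreal μ p)]
    norm_num [Nat.factorial]
  · intro l hl
    have h1 := (tendsto_const_nhds (x := (2:ℝ))).div (B_lim hμc hl) hμ0.ne'
    refine h1.congr fun T => ?_
    simp only [Pi.div_apply, div_div]
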